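/- Let T be a non-degenerate triangle, ε > 0, and P a finite subset of ℝ². Let H(P) denote the family of 3-element subsets of P that form a triangle ε-similar to T; for x ∈ P let deg(x) be the number of members of H(P) containing x, and for x, y ∈ P let deg(x, y) be the number of members of H(P) containing both x and y. Suppose x, y ∈ P are distinct, deg(x, y) = 0, and deg(x) ≥ deg(y). Then there exists η > 0 such that for every point x′ ∉ P with 0 < dist(x′, x) < η, the set P′ = (P ∪ {x′}) \ {y} satisfies |H(P′)| ≥ |H(P)|; moreover, if deg(x) > deg(y), then |H(P′)| > |H(P)|. -/

import Mathlib

open scoped Classical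

open EuclideanGeometry

noncomputable section

abbrev Plane := EuclideanSpace ℝ (Fin 2)

/-- A triple of points is a (non-degenerate) triangle if its points are not collinear. -/
def IsTriangle (p : Fin 3 → Plane) : Prop := ¬ Collinear ℝ (Set.range p)

/-- The angle of the triple `p` at its `i`-th vertex. -/
noncomputable def triAngle (p : Fin 3 → Plane) (i : Fin 3) : ℝ :=
  EuclideanGeometry.angle (p (i + 1)) (p i) (p (i + 2))

/-- `p` is ε-similar to `T`: some correspondence of vertices makes corresponding
angles differ by less than ε. -/
def EpsSimilar (ε : ℝ) (p T : Fin 3 → Plane) : Prop :=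
  ∃ σ : Equiv.Perm (Fin 3), ∀ i, |triAngle p i - triAngle T (σ i)| < ε

/-- The finite set `S` forms a triangle ε-similar to `T`. -/
def FormsSimilar (ε : ℝ) (T : Fin 3 → Plane) (S : Finset Plane) : Prop :=
  ∃ p : Fin 3 → Plane, (S : Set Plane) = Set.range p ∧ IsTriangle p ∧ EpsSimilar ε p T

/-- The number of 3-element subsets of `P` forming a triangle ε-similar to `T`. -/
noncomputable def simCount (ε : ℝ) (T : Fin 3 → Plane) (P : Finset Plane) : ℕ :=
  Set.ncard {S : Finset Plane | S ⊆ P ∧ S.card = 3 ∧ FormsSimilar ε T S}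

/-- `hGeo n T ε` = maximum over `n`-point sets `P` of the number of 3-element
subsets of `P` forming a triangle ε-similar to `T`. -/
noncomputable def hGeo (n : ℕ) (T : Fin 3 → Plane) (ε : ℝ) : ℕ :=
  sSup {m | ∃ P : Finset Plane, P.card = n ∧ simCount ε T P = m}

/-- The recurrence defining the sequence `h`. -/
def HRec (h : ℕ → ℕ) : Prop :=
  h 0 = 0 ∧ h 1 = 0 ∧ h 2 = 0 ∧
  ∀ n, 3 ≤ n → IsGreatest
    {m | ∃ a b c : ℕ, a + b + c = n ∧ a ≤ n - 1 ∧ b ≤ n - 1 ∧ c ≤ n - 1 ∧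
      m = a * b * c + h a + h b + h c} (h n)

/-- The number of 3-element subsets of `P` forming a triangle ε-similar to `T`
and containing `x`. -/
noncomputable def degP (ε : ℝ) (T : Fin 3 → Plane) (P : Finset Plane) (x : Plane) : ℕ :=
  Set.ncard {S : Finset Plane | S ⊆ P ∧ S.card = 3 ∧ FormsSimilar ε T S ∧ x ∈ S}

/-- The number of 3-element subsets of `P` forming a triangle ε-similar to `T`
and containing both `x` and `y`. -/
noncomputable def codegP (ε : ℝ) (T : Fin 3 → Plane) (P : Finset Plane)
    (x y : Plane) : ℕ :=
  Set.ncard {S : Finset Plane | S ⊆ P ∧ S.card = 3 ∧ FormsSimilar ε T S ∧ x ∈ S ∧ y ∈ S}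

/-!
Being a triangle ε-similar to `T` is an open condition on the vertices, so for `x'` close to `x`
every triangle of `H(P)` through `x` stays in the family when `x` is moved to `x'`. Passing from `P`
to `P'` destroys exactly the `deg(y)` triangles through `y`; as `deg(x, y) = 0`, no triangle
through `x` uses `y`, so moving `x` to `x'` produces `deg(x)` new triangles inside `P'`. Hence
`|H(P)| + deg(x) ≤ |H(P')| + deg(y)`.
-/

section Replacement

open Finset

lemma injOn_insert_erase {α : Type*} [DecidableEq α] (x x' : α) :
    Set.InjOn (fun S : Finset α ↦ insert x' (S.erase x)) {S | x ∈ S ∧ x' ∉ S} := by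
  rintro S ⟨hxS, hx'S⟩ R ⟨hxR, hx'R⟩ h
  have herase : S.erase x = R.erase x := by
    simpa only [erase_insert (mt mem_of_mem_erase hx'S), erase_insert (mt mem_of_mem_erase hx'R)]
      using congrArg (erase · x') h
  rw [← insert_erase hxS, herase, insert_erase hxR]

lemma card_add_card_filter_mem_le_of_replace {α : Type*} [DecidableEq α]
    {𝒜 ℬ : Finset (Finset α)} {x x' y : α} (hfresh : ∀ S ∈ 𝒜, x' ∉ S)
    (hkeep : ∀ S ∈ 𝒜, y ∉ S → S ∈ ℬ)
    (hreplace : ∀ S ∈ 𝒜, x ∈ S → insert x' (S.erase x) ∈ ℬ) :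
    #𝒜 + #{S ∈ 𝒜 | x ∈ S} ≤ #ℬ + #{S ∈ 𝒜 | y ∈ S} := by
  let kept : Finset (Finset α) := {S ∈ 𝒜 | y ∉ S}
  let replaced : Finset (Finset α) := image (fun S ↦ insert x' (S.erase x)) {S ∈ 𝒜 | x ∈ S}
  have hsplit : #{S ∈ 𝒜 | y ∈ S} + #kept = #𝒜 := card_filter_add_card_filter_not _
  have hreplaced : #replaced = #{S ∈ 𝒜 | x ∈ S} := by
    refine card_image_of_injOn ((injOn_insert_erase x x').mono fun S hS ↦ ?_)
    obtain ⟨hS𝒜, hxS⟩ := mem_filter.1 hS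
    exact ⟨hxS, hfresh S hS𝒜⟩
  have hdisjoint : Disjoint kept replaced := by
    refine disjoint_left.2 fun S hS hS' ↦ hfresh S (mem_filter.1 hS).1 ?_
    obtain ⟨R, -, rfl⟩ := mem_image.1 hS'
    exact mem_insert_self x' _
  have hsubset : kept ∪ replaced ⊆ ℬ := by
    refine union_subset (fun S hS ↦ ?_) (image_subset_iff.2 fun S hS ↦ ?_)
    · exact hkeep S (mem_filter.1 hS).1 (mem_filter.1 hS).2
    · exact hreplace S (mem_filter.1 hS).1 (mem_filter.1 hS).2
  have hcard : #kept + #replaced ≤ #ℬ :=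
    card_union_of_disjoint hdisjoint ▸ card_le_card hsubset
  omega

end Replacement

section Perturbation

open scoped Topology

lemma range_update_of_injective {ι α : Type*} [DecidableEq ι] {f : ι → α}
    (hf : Function.Injective f) (i : ι) (a : α) :
    Set.range (Function.update f i a) = insert a (Set.range f \ {f i}) := by
  have hrest : Function.update f i a '' {i}ᶜ = f '' {i}ᶜ :=
    Set.image_congr fun j hj ↦ Function.update_of_ne hj a f
  rw [← Set.image_univ, ← Set.union_compl_self {i}, Set.image_union, Set.image_singleton, hrest,
    Function.update_self, Set.image_compl_eq_range_sdiff_image hf, Set.image_singleton,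
    Set.singleton_union]

variable {ε : ℝ} {T p : Fin 3 → Plane}

lemma isTriangle_iff_affineIndependent : IsTriangle p ↔ AffineIndependent ℝ p :=
  affineIndependent_iff_not_collinear.symm

lemma IsTriangle.injective (hp : IsTriangle p) : Function.Injective p :=
  (isTriangle_iff_affineIndependent.1 hp).injective

lemma IsTriangle.eventually_nhds (hp : IsTriangle p) : ∀ᶠ q in 𝓝 p, IsTriangle q := by
  simp only [isTriangle_iff_affineIndependent] at hp ⊢
  exact isOpen_setOfPred_affineIndependent.mem_nhds hp

lemma continuousAt_triAngle {i : Fin 3} (h₁ : p (i + 1) ≠ p i) (h₂ : p (i + 2) ≠ p i) :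
    ContinuousAt (triAngle · i) p :=
  ContinuousAt.comp (f := fun q : Fin 3 → Plane ↦ (q (i + 1), q i, q (i + 2)))
    (continuousAt_angle (x := (p (i + 1), p i, p (i + 2))) h₁ h₂) (by fun_prop)

lemma EpsSimilar.eventually_nhds (hinj : Function.Injective p) (hp : EpsSimilar ε p T) :
    ∀ᶠ q in 𝓝 p, EpsSimilar ε q T := by
  obtain ⟨σ, hσ⟩ := hp
  have hclose (i : Fin 3) : ∀ᶠ q in 𝓝 p, |triAngle q i - triAngle T (σ i)| < ε := by
    have hangle : ContinuousAt (triAngle · i) p :=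
      continuousAt_triAngle (hinj.ne (by simp)) (hinj.ne (by simp))
    exact (hangle.sub continuousAt_const).abs.eventually_lt continuousAt_const (hσ i)
  filter_upwards [Filter.eventually_all.2 hclose] with q hq using ⟨σ, hq⟩

lemma FormsSimilar.eventually_insert_erase {S : Finset Plane} {x : Plane}
    (hS : FormsSimilar ε T S) (hx : x ∈ S) :
    ∀ᶠ x' in 𝓝 x, FormsSimilar ε T (insert x' (S.erase x)) := by
  obtain ⟨p, hrange, htri, hsim⟩ := hS
  obtain ⟨i, rfl⟩ : x ∈ Set.range p := hrange ▸ hx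
  have hmove : Filter.Tendsto (Function.update p i) (𝓝 (p i)) (𝓝 p) := by
    have hcont : Continuous (Function.update p i) := continuous_const.update i continuous_id
    simpa only [Function.update_eq_self] using hcont.tendsto (p i)
  filter_upwards [hmove.eventually htri.eventually_nhds,
    hmove.eventually (hsim.eventually_nhds htri.injective)] with x' htri' hsim'
  refine ⟨Function.update p i x', ?_, htri', hsim'⟩
  rw [Finset.coe_insert, Finset.coe_erase, hrange, range_update_of_injective htri.injective]

end Perturbation

section SimilarTriples

open Finset
open scoped Topology

/-- The family `H(P)` of 3-element subsets of `P` forming a triangle ε-similar to `T`, as a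
finset, so that `simCount`, `degP` and `codegP` become cardinalities of its filters. -/
def similarTriples (ε : ℝ) (T : Fin 3 → Plane) (P : Finset Plane) : Finset (Finset Plane) :=
  {S ∈ P.powersetCard 3 | FormsSimilar ε T S}

variable {ε : ℝ} {T : Fin 3 → Plane} {P Q S : Finset Plane} {x x' y : Plane}

lemma mem_similarTriples :
    S ∈ similarTriples ε T P ↔ S ⊆ P ∧ #S = 3 ∧ FormsSimilar ε T S := by
  rw [similarTriples, mem_filter, mem_powersetCard, and_assoc]

lemma simCount_eq_card : simCount ε T P = #(similarTriples ε T P) := by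
  rw [simCount, ← Set.ncard_coe_finset]
  congr 1
  ext S
  exact mem_similarTriples.symm

lemma degP_eq_card : degP ε T P x = #{S ∈ similarTriples ε T P | x ∈ S} := by
  rw [degP, ← Set.ncard_coe_finset]
  congr 1
  ext S
  simp [mem_similarTriples, and_assoc]

lemma codegP_eq_card : codegP ε T P x y = #{S ∈ similarTriples ε T P | x ∈ S ∧ y ∈ S} := by
  rw [codegP, ← Set.ncard_coe_finset]
  congr 1
  ext S
  simp [mem_similarTriples, and_assoc]

lemma codegP_eq_zero_iff :
    codegP ε T P x y = 0 ↔ ∀ S ∈ similarTriples ε T P, x ∈ S → y ∉ S := by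
  simp only [codegP_eq_card, card_eq_zero, filter_eq_empty_iff, not_and]

lemma mem_similarTriples_of_subset (hS : S ∈ similarTriples ε T P) (hSQ : S ⊆ Q) :
    S ∈ similarTriples ε T Q :=
  mem_similarTriples.2 ⟨hSQ, (mem_similarTriples.1 hS).2⟩

lemma insert_erase_mem_similarTriples (hS : S ∈ similarTriples ε T P) (hx : x ∈ S)
    (hx' : x' ∉ S) (hsim : FormsSimilar ε T (insert x' (S.erase x))) :
    insert x' (S.erase x) ∈ similarTriples ε T (insert x' P) := by
  obtain ⟨hSP, hcard, -⟩ := mem_similarTriples.1 hS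
  refine mem_similarTriples.2 ⟨insert_subset_insert x' ((erase_subset x S).trans hSP), ?_, hsim⟩
  rw [card_insert_of_notMem (mt mem_of_mem_erase hx'), card_erase_add_one hx, hcard]

lemma eventually_forall_formsSimilar_insert_erase (ε : ℝ) (T : Fin 3 → Plane)
    (P : Finset Plane) (x : Plane) :
    ∀ᶠ x' in 𝓝 x, ∀ S ∈ similarTriples ε T P, x ∈ S →
      FormsSimilar ε T (insert x' (S.erase x)) := by
  refine (Filter.eventually_all_finset _).2 fun S hS ↦ Filter.eventually_imp_distrib_left.2 ?_
  exact (mem_similarTriples.1 hS).2.2.eventually_insert_erase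

lemma simCount_add_degP_le (hy : y ∈ P) (hx' : x' ∉ P) (hco : codegP ε T P x y = 0)
    (hsim : ∀ S ∈ similarTriples ε T P, x ∈ S → FormsSimilar ε T (insert x' (S.erase x))) :
    simCount ε T P + degP ε T P x ≤ simCount ε T ((insert x' P).erase y) + degP ε T P y := by
  have hfresh (S) (hS : S ∈ similarTriples ε T P) : x' ∉ S :=
    fun h ↦ hx' ((mem_similarTriples.1 hS).1 h)
  have hyx' : y ≠ x' := ne_of_mem_of_not_mem hy hx'
  simp only [simCount_eq_card, degP_eq_card]
  refine card_add_card_filter_mem_le_of_replace hfresh (fun S hS hyS ↦ ?_) fun S hS hxS ↦ ?_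
  · refine mem_similarTriples_of_subset hS (subset_erase.2 ⟨?_, hyS⟩)
    exact (mem_similarTriples.1 hS).1.trans (subset_insert x' P)
  · have hreplaced := insert_erase_mem_similarTriples hS hxS (hfresh S hS) (hsim S hS hxS)
    have hyS : y ∉ S := codegP_eq_zero_iff.1 hco S hS hxS
    refine mem_similarTriples_of_subset hreplaced (subset_erase.2 ⟨?_, ?_⟩)
    · exact (mem_similarTriples.1 hreplaced).1
    · simp [hyx', hyS]

end SimilarTriples

/-- Replacement lemma: if `x, y ∈ P` are distinct, `deg(x, y) = 0` and
`deg(x) ≥ deg(y)`, then for any point `x\'` close enough to `x` (and distinct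
from it), replacing `y` by `x\'` does not decrease the number of triangles
ε-similar to `T`; it strictly increases it if `deg(x) > deg(y)`. -/
theorem stmt_15 (T : Fin 3 → Plane) (hT : IsTriangle T) (ε : ℝ) (hε : 0 < ε)
    (P : Finset Plane) (x y : Plane) (hx : x ∈ P) (hy : y ∈ P) (hxy : x ≠ y)
    (hco : codegP ε T P x y = 0) (hdeg : degP ε T P y ≤ degP ε T P x) :
    ∃ η : ℝ, 0 < η ∧ ∀ x' : Plane, x' ∉ P → 0 < dist x' x → dist x' x < η →
      simCount ε T P ≤ simCount ε T ((insert x' P).erase y) ∧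
      (degP ε T P y < degP ε T P x →
        simCount ε T P < simCount ε T ((insert x' P).erase y)) := by
  obtain ⟨η, hη, hnear⟩ :=
    Metric.eventually_nhds_iff.1 (eventually_forall_formsSimilar_insert_erase ε T P x)
  refine ⟨η, hη, fun x' hx' _ hdist ↦ ?_⟩
  have hcount := simCount_add_degP_le hy hx' hco (hnear hdist)
  exact ⟨by omega, fun hlt ↦ by omega⟩

end
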